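/- Let (a_1, b_1), ..., (a_k, b_k) be pairwise linearly independent vectors in ℝ², let s ≥ 0 be an integer, and suppose a function f ∈ C^s(ℝ²) has the form f(x, y) = ∑_{i=1}^k f_i(a_i x + b_i y), where f_1, ..., f_k : ℝ → ℝ are arbitrary univariate functions. Then there exist functions g_1, ..., g_k ∈ C^s(ℝ) such that f(x, y) = ∑_{i=1}^k g_i(a_i x + b_i y) for all (x, y) ∈ ℝ². -/

import Mathlib

open MeasureTheory Filter Topology
open scoped Convolution

/-- The linear form `p ↦ w₁ p₁ + w₂ p₂`, along which the ridge functions of direction `w` vary. -/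
def ridgeForm (w : ℝ × ℝ) : ℝ × ℝ →L[ℝ] ℝ :=
  w.1 • ContinuousLinearMap.fst ℝ ℝ ℝ + w.2 • ContinuousLinearMap.snd ℝ ℝ ℝ

@[simp] theorem ridgeForm_apply (w p : ℝ × ℝ) : ridgeForm w p = w.1 * p.1 + w.2 * p.2 := by
  simp [ridgeForm]

/-- A vector spanning the kernel of `ridgeForm w` when `w ≠ 0`. -/
def perp (w : ℝ × ℝ) : ℝ × ℝ := (-w.2, w.1)

@[simp] theorem perp_fst (w : ℝ × ℝ) : (perp w).1 = -w.2 := rfl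

@[simp] theorem perp_snd (w : ℝ × ℝ) : (perp w).2 = w.1 := rfl

/-- The difference operator `f ↦ f (· + h) - f`. -/
def differenceOp (h : ℝ × ℝ) : (ℝ × ℝ → ℝ) →ₗ[ℝ] (ℝ × ℝ → ℝ) where
  toFun f p := f (p + h) - f p
  map_add' f g := by ext p; simp; ring
  map_smul' c f := by ext p; simp; ring

theorem differenceOp_apply (h : ℝ × ℝ) (f : ℝ × ℝ → ℝ) (p : ℝ × ℝ) :
    differenceOp h f p = f (p + h) - f p := rfl

theorem differenceOp_comm (h h' : ℝ × ℝ) (f : ℝ × ℝ → ℝ) :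
    differenceOp h (differenceOp h' f) = differenceOp h' (differenceOp h f) := by
  ext p
  simp only [differenceOp_apply, add_right_comm p h h']
  ring

/-- The functions killed by all products of differences along the `perp w`, `w ∈ l`. -/
def mixedDiffKer : List (ℝ × ℝ) → Submodule ℝ (ℝ × ℝ → ℝ)
  | [] => ⊥
  | w :: l => ⨅ t : ℝ, (mixedDiffKer l).comap (differenceOp (t • perp w))

theorem mem_mixedDiffKer_cons {w : ℝ × ℝ} {l : List (ℝ × ℝ)} {f : ℝ × ℝ → ℝ} :
    f ∈ mixedDiffKer (w :: l) ↔ ∀ t : ℝ, differenceOp (t • perp w) f ∈ mixedDiffKer l := by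
  simp [mixedDiffKer, Submodule.mem_iInf]

theorem mem_mixedDiffKer_swap {w₁ w₂ : ℝ × ℝ} {l : List (ℝ × ℝ)} {f : ℝ × ℝ → ℝ}
    (hf : f ∈ mixedDiffKer (w₁ :: w₂ :: l)) : f ∈ mixedDiffKer (w₂ :: w₁ :: l) := by
  simp only [mem_mixedDiffKer_cons] at hf ⊢
  intro t t'
  rw [differenceOp_comm]
  exact hf t' t

theorem translate_mem_mixedDiffKer (q : ℝ × ℝ) : ∀ {l : List (ℝ × ℝ)} {f : ℝ × ℝ → ℝ},
    f ∈ mixedDiffKer l → (fun p => f (p + q)) ∈ mixedDiffKer l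
  | [], f, hf => by
    have hf0 : f = 0 := hf
    subst hf0
    exact Submodule.zero_mem _
  | w :: l, f, hf => by
    rw [mem_mixedDiffKer_cons] at hf ⊢
    intro t
    convert translate_mem_mixedDiffKer q (hf t) using 1
    ext p
    simp [differenceOp_apply, add_right_comm]

/-- `mixedDiffKer l` is closed under pointwise limits. -/
theorem mem_mixedDiffKer_of_tendsto : ∀ {l : List (ℝ × ℝ)}
    {u : ℕ → ℝ × ℝ → ℝ} {f : ℝ × ℝ → ℝ}, (∀ n, u n ∈ mixedDiffKer l) →
    (∀ p, Tendsto (fun n => u n p) atTop (𝓝 (f p))) → f ∈ mixedDiffKer l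
  | [], u, f, hu, hlim => by
    have hu0 : ∀ n, u n = 0 := hu
    refine (Submodule.mem_bot ℝ).2 (funext fun p => ?_)
    exact tendsto_nhds_unique (hlim p) (by simp [hu0])
  | w :: l, u, f, hu, hlim => by
    simp only [mem_mixedDiffKer_cons] at hu ⊢
    exact fun t => mem_mixedDiffKer_of_tendsto (fun n => hu n t)
      fun p => (hlim _).sub (hlim p)

/-- `mixedDiffKer l` is closed under integrals over compact parameter sets. -/
theorem setIntegral_mem_mixedDiffKer {K : Set (ℝ × ℝ)} (hK : IsCompact K) :
    ∀ {l : List (ℝ × ℝ)} {G : ℝ × ℝ → ℝ × ℝ → ℝ}, (∀ p, Continuous fun q => G q p) →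
    (∀ q, G q ∈ mixedDiffKer l) → (fun p => ∫ q in K, G q p) ∈ mixedDiffKer l
  | [], G, _, hG => by
    have hG0 : ∀ q, G q = 0 := hG
    refine (Submodule.mem_bot ℝ).2 (funext fun p => ?_)
    simp [hG0]
  | w :: l, G, hc, hG => by
    simp only [mem_mixedDiffKer_cons] at hG ⊢
    intro t
    convert setIntegral_mem_mixedDiffKer hK
      (G := fun q => differenceOp (t • perp w) (G q)) (fun p => (hc _).sub (hc p))
      (fun q => hG q t) using 1
    ext p
    exact (integral_sub ((hc _).continuousOn.integrableOn_compact hK)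
      ((hc p).continuousOn.integrableOn_compact hK)).symm

theorem fderiv_perp_mem_mixedDiffKer {w : ℝ × ℝ} {l : List (ℝ × ℝ)} {f : ℝ × ℝ → ℝ}
    (hd : Differentiable ℝ f) (hf : f ∈ mixedDiffKer (w :: l)) :
    (fun p => fderiv ℝ f p (perp w)) ∈ mixedDiffKer l := by
  rw [mem_mixedDiffKer_cons] at hf
  refine mem_mixedDiffKer_of_tendsto (u := fun n : ℕ =>
    ((n : ℝ) + 1) • differenceOp ((1 / ((n : ℝ) + 1)) • perp w) f)
    (fun n => Submodule.smul_mem _ _ (hf _)) fun p => ?_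
  have h := ((hd p).hasFDerivAt.hasLineDerivAt (perp w)).tendsto_slope_zero_right.comp
    (tendsto_nhdsWithin_iff.2 ⟨tendsto_one_div_add_atTop_nhds_zero_nat (𝕜 := ℝ),
      Eventually.of_forall fun n => by simp; positivity⟩)
  refine h.congr fun n => ?_
  simp [differenceOp_apply]

theorem ridge_mem_mixedDiffKer (g : ℝ → ℝ) {w : ℝ × ℝ} {l : List (ℝ × ℝ)} (hl : w ∈ l) :
    (fun p => g (ridgeForm w p)) ∈ mixedDiffKer l := by
  suffices h : ∀ (l : List (ℝ × ℝ)), w ∈ l → ∀ f : ℝ × ℝ → ℝ,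
      (∀ p (t : ℝ), f (p + t • perp w) = f p) → f ∈ mixedDiffKer l by
    refine h l hl _ fun p t => congrArg g ?_
    simp; ring
  clear hl
  intro l
  induction l with
  | nil => simp
  | cons v l ih =>
    intro hl f hf
    rw [mem_mixedDiffKer_cons]
    intro t
    rcases List.mem_cons.1 hl with rfl | hl
    · convert Submodule.zero_mem _ using 1
      ext p
      simp [differenceOp_apply, hf]
    · refine ih hl _ fun p t' => ?_
      simp only [differenceOp_apply]
      rw [add_right_comm, hf, hf]

/-- The ridge functions `g (w₁ x + w₂ y)` with `g` of class `Cⁿ`. -/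
def ridgeSubmodule (n : WithTop ℕ∞) (w : ℝ × ℝ) : Submodule ℝ (ℝ × ℝ → ℝ) where
  carrier := {f | ∃ g : ℝ → ℝ, ContDiff ℝ n g ∧ f = fun p => g (ridgeForm w p)}
  add_mem' := by
    rintro _ _ ⟨g, hg, rfl⟩ ⟨g', hg', rfl⟩
    exact ⟨g + g', hg.add hg', rfl⟩
  zero_mem' := ⟨0, contDiff_const, rfl⟩
  smul_mem' := by
    rintro c _ ⟨g, hg, rfl⟩
    exact ⟨c • g, contDiff_const.smul hg, rfl⟩

/-- Sums of `Cⁿ` ridge functions with directions in `l`. -/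
def ridgeSums (n : WithTop ℕ∞) : List (ℝ × ℝ) → Submodule ℝ (ℝ × ℝ → ℝ)
  | [] => ⊥
  | w :: l => ridgeSubmodule n w ⊔ ridgeSums n l

theorem ridgeSums_cons (n : WithTop ℕ∞) (w : ℝ × ℝ) (l : List (ℝ × ℝ)) :
    ridgeSums n (w :: l) = ridgeSubmodule n w ⊔ ridgeSums n l := rfl

theorem contDiff_of_mem_ridgeSums {n : WithTop ℕ∞} : ∀ {l : List (ℝ × ℝ)} {f : ℝ × ℝ → ℝ},
    f ∈ ridgeSums n l → ContDiff ℝ n f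
  | [], f, hf => by
    have hf0 : f = 0 := hf
    subst hf0
    exact contDiff_const
  | w :: l, f, hf => by
    obtain ⟨_, ⟨g, hg, rfl⟩, h, hh, rfl⟩ := Submodule.mem_sup.1 hf
    exact (hg.comp (ridgeForm w).contDiff).add (contDiff_of_mem_ridgeSums hh)

theorem ridgeSums_anti {m n : WithTop ℕ∞} (hmn : m ≤ n) :
    ∀ l : List (ℝ × ℝ), ridgeSums n l ≤ ridgeSums m l
  | [] => le_rfl
  | w :: l => sup_le_sup (by rintro _ ⟨g, hg, rfl⟩; exact ⟨g, hg.of_le hmn, rfl⟩)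
      (ridgeSums_anti hmn l)

theorem ridgeSums_le_mixedDiffKer (n : WithTop ℕ∞) (l : List (ℝ × ℝ)) :
    ridgeSums n l ≤ mixedDiffKer l := by
  suffices h : ∀ l' l : List (ℝ × ℝ), l' ⊆ l → ridgeSums n l' ≤ mixedDiffKer l from
    h l l (List.Subset.refl l)
  intro l'
  induction l' with
  | nil => exact fun _ _ => bot_le
  | cons w l' ih =>
    intro l hl
    refine sup_le ?_ (ih l fun v hv => hl (List.mem_cons_of_mem _ hv))
    rintro _ ⟨g, -, rfl⟩
    exact ridge_mem_mixedDiffKer g (hl List.mem_cons_self)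

theorem mem_ridgeSubmodule_of_invariant {n : WithTop ℕ∞} {w : ℝ × ℝ} (hw : w ≠ 0)
    {f : ℝ × ℝ → ℝ} (hf : ContDiff ℝ n f) (hinv : ∀ p (t : ℝ), f (p + t • perp w) = f p) :
    f ∈ ridgeSubmodule n w := by
  have hpos : w.1 ^ 2 + w.2 ^ 2 ≠ 0 := by
    intro h
    apply hw
    ext
    · simp; nlinarith [sq_nonneg w.1, sq_nonneg w.2]
    · simp; nlinarith [sq_nonneg w.1, sq_nonneg w.2]
  refine ⟨fun u => f ((u / (w.1 ^ 2 + w.2 ^ 2)) • w),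
    hf.comp ((contDiff_id.div_const _).smul contDiff_const), funext fun p => ?_⟩
  rw [← hinv p ((w.2 * p.1 - w.1 * p.2) / (w.1 ^ 2 + w.2 ^ 2))]
  congr 1
  ext
  · simp; field_simp; ring
  · simp; field_simp; ring

theorem exists_contDiff_antideriv {n : ℕ} {g : ℝ → ℝ} (hg : ContDiff ℝ n g) :
    ∃ G : ℝ → ℝ, ContDiff ℝ (n + 1 : ℕ) G ∧ ∀ x, HasDerivAt G (g x) x := by
  have hG : ∀ x, HasDerivAt (fun x => ∫ t in (0 : ℝ)..x, g t) (g x) x :=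
    fun x => (hg.continuous.integral_hasStrictDerivAt 0 x).hasDerivAt
  refine ⟨_, ?_, hG⟩
  push_cast
  refine contDiff_succ_iff_deriv.2 ⟨fun x => (hG x).differentiableAt, by simp, ?_⟩
  rwa [funext fun x => (hG x).deriv]

/-- Integration of a sum of ridge functions along a direction transversal to all of them. -/
theorem exists_ridgeSums_lineDeriv {n : ℕ} {v : ℝ × ℝ} : ∀ {l : List (ℝ × ℝ)} {h : ℝ × ℝ → ℝ},
    (∀ w ∈ l, ridgeForm w v ≠ 0) → h ∈ ridgeSums n l →
    ∃ H ∈ ridgeSums (n + 1 : ℕ) l, ∀ p, fderiv ℝ H p v = h p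
  | [], h, _, hh => by
    have hh0 : h = 0 := hh
    subst hh0
    exact ⟨0, Submodule.zero_mem _, by simp⟩
  | w :: l, h, hl, hh => by
    obtain ⟨_, ⟨g, hg, rfl⟩, h', hh', rfl⟩ := Submodule.mem_sup.1 hh
    obtain ⟨H, hH, hHd⟩ := exists_ridgeSums_lineDeriv
      (fun w' hw' => hl w' (List.mem_cons_of_mem _ hw')) hh'
    obtain ⟨G, hG, hGd⟩ := exists_contDiff_antideriv hg
    have hw := hl w List.mem_cons_self
    refine ⟨(fun p => (ridgeForm w v)⁻¹ * G (ridgeForm w p)) + H,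
      Submodule.add_mem_sup ⟨fun u => (ridgeForm w v)⁻¹ * G u, contDiff_const.mul hG, rfl⟩ hH,
      fun p => ?_⟩
    have h1 : HasFDerivAt (fun p => (ridgeForm w v)⁻¹ * G (ridgeForm w p))
        ((ridgeForm w v)⁻¹ • (g (ridgeForm w p) • ridgeForm w)) p :=
      ((hGd (ridgeForm w p)).comp_hasFDerivAt p (ridgeForm w).hasFDerivAt).const_mul _
    have h2 : DifferentiableAt ℝ H p :=
      (contDiff_of_mem_ridgeSums hH).differentiable (by simp) p
    rw [(h1.add h2.hasFDerivAt).fderiv]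
    simp only [add_apply, smul_apply, hHd,
      Pi.add_apply, smul_eq_mul]
    field_simp

theorem mem_ridgeSums_cons_of_fderiv {n : ℕ} {w : ℝ × ℝ} (hw : w ≠ 0) {l : List (ℝ × ℝ)}
    (hl : ∀ w' ∈ l, ridgeForm w' (perp w) ≠ 0) {f : ℝ × ℝ → ℝ} (hf : ContDiff ℝ (n + 1 : ℕ) f)
    (h : (fun p => fderiv ℝ f p (perp w)) ∈ ridgeSums n l) :
    f ∈ ridgeSums (n + 1 : ℕ) (w :: l) := by
  obtain ⟨H, hH, hHd⟩ := exists_ridgeSums_lineDeriv hl h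
  have hHc := contDiff_of_mem_ridgeSums hH
  have hfH : ContDiff ℝ (n + 1 : ℕ) (f - H) := hf.sub hHc
  rw [← sub_add_cancel f H]
  refine Submodule.add_mem_sup (mem_ridgeSubmodule_of_invariant hw hfH fun p t => ?_) hH
  have hder : ∀ t : ℝ, HasDerivAt (fun t : ℝ => (f - H) (p + t • perp w)) 0 t := by
    intro t
    have h1 := (hfH.differentiable (by simp) (p + t • perp w)).hasFDerivAt
    have h2 : HasDerivAt (fun t : ℝ => p + t • perp w) (perp w) t := by
      simpa using ((hasDerivAt_id t).smul_const (perp w)).const_add p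
    have h3 := h1.comp_hasDerivAt t h2
    rwa [fderiv_sub (hf.differentiable (by simp) _) (hHc.differentiable (by simp) _),
      sub_apply, hHd, sub_self] at h3
  simpa using is_const_of_deriv_eq_zero (fun t => (hder t).differentiableAt)
    (fun t => (hder t).deriv) t 0

/-- A continuous function killed by mixed differences along two independent directions and
further ones is the sum of two continuous functions, each killed after dropping one of these
two directions, and of a smooth function. -/
theorem exists_smooth_decomposition {w₁ w₂ : ℝ × ℝ} (hw : w₁.1 * w₂.2 - w₁.2 * w₂.1 ≠ 0)
    {l : List (ℝ × ℝ)} {f : ℝ × ℝ → ℝ} (hf : Continuous f)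
    (hfk : f ∈ mixedDiffKer (w₁ :: w₂ :: l)) :
    ∃ g₁ g₂ : ℝ × ℝ → ℝ, Continuous g₁ ∧ Continuous g₂ ∧ ContDiff ℝ 1 (f - g₁ - g₂) ∧
      g₁ ∈ mixedDiffKer (w₂ :: l) ∧ g₂ ∈ mixedDiffKer (w₁ :: l) := by
  set d := w₁.1 * w₂.2 - w₁.2 * w₂.1 with hd
  let φ : ContDiffBump (0 : ℝ × ℝ) := ⟨1, 2, by norm_num, by norm_num⟩
  set Φ : ℝ × ℝ → ℝ := φ.normed volume with hΦ
  have hΦc : Continuous Φ := φ.continuous_normed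
  have hΦs : HasCompactSupport Φ := φ.hasCompactSupport_normed
  have hΦi : ∫ q, Φ q = 1 := φ.integral_normed
  let K := tsupport Φ
  have hK : IsCompact K := hΦs
  have hΦ0 : ∀ q, q ∉ K → Φ q = 0 := fun q hq => image_eq_zero_of_notMem_tsupport hq
  let σ : ℝ × ℝ → ℝ := fun q => -(ridgeForm w₂ q / d)
  let τ : ℝ × ℝ → ℝ := fun q => ridgeForm w₁ q / d
  have hσ : Continuous σ := by fun_prop
  have hτ : Continuous τ := by fun_prop
  have hq : ∀ q, -q = σ q • perp w₁ + τ q • perp w₂ := by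
    intro q
    ext
    · simp [σ, τ]; field_simp; rw [hd]; ring
    · simp [σ, τ]; field_simp; rw [hd]; ring
  let G₁ : ℝ × ℝ → ℝ × ℝ → ℝ := fun q => (-Φ q) • differenceOp (σ q • perp w₁) f
  let G₂ : ℝ × ℝ → ℝ × ℝ → ℝ := fun q =>
    (-Φ q) • fun p => differenceOp (τ q • perp w₂) f (p + σ q • perp w₁)
  have hG₁ : Continuous fun z : (ℝ × ℝ) × (ℝ × ℝ) => G₁ z.2 z.1 := by
    simp only [G₁, Pi.smul_apply, differenceOp_apply, smul_eq_mul]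
    fun_prop
  have hG₂ : Continuous fun z : (ℝ × ℝ) × (ℝ × ℝ) => G₂ z.2 z.1 := by
    simp only [G₂, Pi.smul_apply, differenceOp_apply, smul_eq_mul]
    fun_prop
  have hG₁p : ∀ p, Continuous fun q => G₁ q p := fun p =>
    hG₁.comp (by fun_prop : Continuous fun q => (p, q))
  have hG₂p : ∀ p, Continuous fun q => G₂ q p := fun p =>
    hG₂.comp (by fun_prop : Continuous fun q => (p, q))
  refine ⟨fun p => ∫ q in K, G₁ q p, fun p => ∫ q in K, G₂ q p,
    continuous_parametric_integral_of_continuous hG₁ hK,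
    continuous_parametric_integral_of_continuous hG₂ hK, ?_,
    setIntegral_mem_mixedDiffKer hK hG₁p fun q =>
      Submodule.smul_mem _ _ (mem_mixedDiffKer_cons.1 hfk _),
    setIntegral_mem_mixedDiffKer hK hG₂p fun q => Submodule.smul_mem _ _
      (translate_mem_mixedDiffKer _ (mem_mixedDiffKer_cons.1 (mem_mixedDiffKer_swap hfk) _))⟩
  have hconv : ContDiff ℝ ((1 : ℕ∞) : WithTop ℕ∞)
      (Φ ⋆[ContinuousLinearMap.lsmul ℝ ℝ, volume] f : ℝ × ℝ → ℝ) :=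
    hΦs.contDiff_convolution_left _ φ.contDiff_normed hf.locallyIntegrable
  suffices h : (f - (fun p => ∫ q in K, G₁ q p) - fun p => ∫ q in K, G₂ q p) =
      (Φ ⋆[ContinuousLinearMap.lsmul ℝ ℝ, volume] f : ℝ × ℝ → ℝ) by
    rw [h]
    exact hconv
  ext p
  have hfi : IntegrableOn (fun q => Φ q * f p) K :=
    (hΦc.mul continuous_const).continuousOn.integrableOn_compact hK
  have e0 : f p = ∫ q in K, Φ q * f p := by
    rw [setIntegral_eq_integral_of_forall_compl_eq_zero (fun q hq => by simp [hΦ0 q hq]),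
      integral_mul_const, hΦi, one_mul]
  have hi₁ := (hG₁p p).continuousOn.integrableOn_compact (μ := volume) hK
  have hi₂ := (hG₂p p).continuousOn.integrableOn_compact (μ := volume) hK
  rw [convolution_lsmul,
    ← setIntegral_eq_integral_of_forall_compl_eq_zero (s := K) (fun q hq => by simp [hΦ0 q hq])]
  simp only [Pi.sub_apply]
  conv_lhs => rw [e0]
  rw [← integral_sub hfi hi₁, ← integral_sub (f := fun q => Φ q * f p - G₁ q p) (hfi.sub hi₁) hi₂]
  refine integral_congr_ae (Eventually.of_forall fun q => ?_)
  simp only [G₁, G₂, Pi.smul_apply, differenceOp_apply, smul_eq_mul]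
  rw [sub_eq_add_neg p q, hq q, add_assoc]
  ring

theorem mem_ridgeSums_of_mem_mixedDiffKer (N : ℕ) : ∀ {l : List (ℝ × ℝ)}, l.length = N →
    (∀ w ∈ l, w ≠ 0) → l.Pairwise (fun w w' => w.1 * w'.2 - w.2 * w'.1 ≠ 0) →
    ∀ {n : ℕ} {f : ℝ × ℝ → ℝ}, ContDiff ℝ n f → f ∈ mixedDiffKer l → f ∈ ridgeSums n l := by
  induction N with
  | zero =>
    intro l hN _ _ n f _ hf
    rw [List.length_eq_zero_iff] at hN
    subst hN
    exact hf
  | succ N ih =>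
    intro l hN h0 hp
    obtain ⟨w, l, rfl⟩ := List.exists_cons_of_length_eq_add_one hN
    have hw := h0 w List.mem_cons_self
    have hlN : l.length = N := by simpa using hN
    have h0l : ∀ w ∈ l, w ≠ 0 := fun w' hw' => h0 w' (List.mem_cons_of_mem _ hw')
    obtain ⟨hpw, hpl⟩ := List.pairwise_cons.1 hp
    have succ_case : ∀ {n : ℕ} {f : ℝ × ℝ → ℝ}, ContDiff ℝ (n + 1 : ℕ) f →
        f ∈ mixedDiffKer (w :: l) → f ∈ ridgeSums (n + 1 : ℕ) (w :: l) := by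
      intro n f hf hfk
      refine mem_ridgeSums_cons_of_fderiv hw (fun w' hw' => ?_) hf
        (ih hlN h0l hpl ?_ (fderiv_perp_mem_mixedDiffKer (hf.differentiable (by simp)) hfk))
      · convert hpw w' hw' using 1
        simp; ring
      · exact (hf.fderiv_right (by simp)).clm_apply contDiff_const
    intro n f hf hfk
    rcases n with _ | n
    · rcases l with _ | ⟨w₂, l⟩
      · refine Submodule.mem_sup_left (mem_ridgeSubmodule_of_invariant hw hf fun p t => ?_)
        have h := congrFun ((Submodule.mem_bot ℝ).1 (mem_mixedDiffKer_cons.1 hfk t)) p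
        simpa [differenceOp_apply, sub_eq_zero] using h
      · obtain ⟨g₁, g₂, hc₁, hc₂, hsm, hk₁, hk₂⟩ := exists_smooth_decomposition
          (hpw w₂ List.mem_cons_self) (by simpa using hf) hfk
        have hg₁ : g₁ ∈ ridgeSums (0 : ℕ) (w :: w₂ :: l) :=
          Submodule.mem_sup_right (ih hlN h0l hpl (by simpa using hc₁) hk₁)
        have hg₂ : g₂ ∈ ridgeSums (0 : ℕ) (w :: w₂ :: l) := by
          rw [ridgeSums_cons, ridgeSums_cons, sup_left_comm]
          exact Submodule.mem_sup_right (ih (l := w :: l) (by simpa using hlN)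
            (fun w' hw' => h0 w' (by simp at hw' ⊢; tauto))
            (hp.sublist (by simp)) (by simpa using hc₂) hk₂)
        have hker : ∀ {g}, g ∈ ridgeSums (0 : ℕ) (w :: w₂ :: l) →
            g ∈ mixedDiffKer (w :: w₂ :: l) := fun hg => ridgeSums_le_mixedDiffKer _ _ hg
        have h1 := succ_case (n := 0) (by simpa using hsm)
          (Submodule.sub_mem _ (Submodule.sub_mem _ hfk (hker hg₁)) (hker hg₂))
        have h2 := Submodule.add_mem _ (Submodule.add_mem _
          (ridgeSums_anti (m := (0 : ℕ)) (by simp) _ h1) hg₂) hg₁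
        convert h2 using 1
        abel
    · exact succ_case hf hfk

theorem exists_of_mem_ridgeSums_ofFn {n : WithTop ℕ∞} : ∀ {k : ℕ} {w : Fin k → ℝ × ℝ}
    {f : ℝ × ℝ → ℝ}, f ∈ ridgeSums n (List.ofFn w) →
    ∃ g : Fin k → ℝ → ℝ, (∀ i, ContDiff ℝ n (g i)) ∧ ∀ p, f p = ∑ i, g i (ridgeForm (w i) p)
  | 0, w, f, hf => ⟨fun _ => 0, fun i => i.elim0, fun p => by
      have hf0 : f = 0 := by simpa [ridgeSums] using hf
      simp [hf0]⟩
  | k + 1, w, f, hf => by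
    rw [List.ofFn_succ] at hf
    obtain ⟨_, ⟨g, hg, rfl⟩, h, hh, rfl⟩ := Submodule.mem_sup.1 hf
    obtain ⟨g', hg', e⟩ := exists_of_mem_ridgeSums_ofFn hh
    refine ⟨Fin.cons g g', Fin.cases hg hg', fun p => ?_⟩
    simp only [Pi.add_apply, Fin.sum_univ_succ, Fin.cons_zero, Fin.cons_succ, e]

/-- If `f ∈ Cˢ(ℝ²)` is a sum of arbitrarily behaved ridge functions with
pairwise linearly independent directions `(a₁,b₁),...,(a_k,b_k)` in `ℝ²`, then
it is a sum of `Cˢ` ridge functions with the same directions. -/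
theorem stmt12 {k : ℕ} (s : ℕ) (a b : Fin k → ℝ)
    (hind : ∀ i j : Fin k, i ≠ j →
      LinearIndependent ℝ ![((a i, b i) : ℝ × ℝ), ((a j, b j) : ℝ × ℝ)])
    (f : ℝ × ℝ → ℝ) (hf : ContDiff ℝ (s : ℕ∞) f)
    (F : Fin k → ℝ → ℝ)
    (hrepr : ∀ x y : ℝ, f (x, y) = ∑ i, F i (a i * x + b i * y)) :
    ∃ g : Fin k → ℝ → ℝ, (∀ i, ContDiff ℝ (s : ℕ∞) (g i)) ∧
      ∀ x y : ℝ, f (x, y) = ∑ i, g i (a i * x + b i * y) := by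
  by_cases h0 : ∀ i, (a i, b i) ≠ (0 : ℝ × ℝ)
  · have hdet : ∀ i j, i ≠ j → a i * b j - b i * a j ≠ 0 := by
      intro i j hij hd
      have h := LinearIndependent.pair_iff.1 (hind i j hij)
      have hj := h (b j) (-b i) (by ext <;> simp <;> linarith)
      have hj' := h (a j) (-a i) (by ext <;> simp <;> linarith)
      exact h0 j (by simp [hj.1, hj'.1])
    have hfk : f ∈ mixedDiffKer (List.ofFn fun i => (a i, b i)) := by
      have hf' : f = ∑ i, fun p => F i (ridgeForm (a i, b i) p) := by
        ext ⟨x, y⟩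
        simp [hrepr]
      rw [hf']
      exact Submodule.sum_mem _ fun i _ => ridge_mem_mixedDiffKer (F i) (List.mem_ofFn.2 ⟨i, rfl⟩)
    obtain ⟨g, hg, e⟩ := exists_of_mem_ridgeSums_ofFn (mem_ridgeSums_of_mem_mixedDiffKer k
      (List.length_ofFn) (by simpa [List.mem_ofFn] using h0)
      (List.pairwise_ofFn.2 fun i j hij => hdet i j hij.ne) (n := s) (by simpa using hf) hfk)
    exact ⟨g, by simpa using hg, fun x y => by simpa using e (x, y)⟩
  · push Not at h0
    obtain ⟨i, hi⟩ := h0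
    have huniq : ∀ j, j = i := by
      intro j
      by_contra hij
      exact (hind i j (Ne.symm hij)).ne_zero 0 hi
    obtain ⟨ha, hb⟩ := Prod.mk.inj hi
    refine ⟨fun j _ => F j 0, fun j => contDiff_const, fun x y => ?_⟩
    rw [hrepr]
    refine Finset.sum_congr rfl fun j _ => ?_
    simp [huniq j, ha, hb]
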